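/- The complete bipartite graph K_{3,3} admits no equitable neighbour-sum-distinguishing edge 2-colouring; equivalently, the equitable nsd-index of K_{3,3} is at least 3. -/

import Mathlib

/-!
Writing `a i j` for the colour of the edge joining `inl i` and `inr j` turns an edge 2-colouring of
`K_{3,3}` into a 3 × 3 matrix with entries in `{1, 2}`: the vertex sums are its row and column sums,
and the colouring is nsd exactly when no row sum equals a column sum. Equitability makes the nine
edges split as 4 + 5, so the total of the entries is 13 or 14. Subtracting 1 from each entry, the
row sums form a multiset of three numbers in `{0, 1, 2, 3}` with total 4 or 5, and so do the column
sums. For total 4 such a multiset is `{3,1,0}`, `{2,2,0}` or `{2,1,1}`; for total 5 it is `{3,2,0}`,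
`{3,1,1}` or `{2,2,1}`. Within each list any two multisets meet, so some row sum equals some column
sum (`exists_common_sum`). With one colour all sums are 3, and with none there is no colouring.
-/

open Finset

variable {V : Type*} [Fintype V] [DecidableEq V]

/-- The vertex sum at `v` induced by an edge colouring `γ`:
the sum of the colours of the edges incident with `v`. -/
def vSum (G : SimpleGraph V) [DecidableRel G.Adj] (γ : Sym2 V → ℕ) (v : V) : ℕ :=
  ∑ u ∈ G.neighborFinset v, γ s(v, u)

/-- `γ` is an edge `k`-colouring: every edge gets a colour in `{1, …, k}`. -/
def IsEdgeKColoring (G : SimpleGraph V) (k : ℕ) (γ : Sym2 V → ℕ) : Prop :=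
  ∀ e ∈ G.edgeSet, 1 ≤ γ e ∧ γ e ≤ k

/-- `γ` is a neighbour-sum-distinguishing edge colouring. -/
def NsdEdge (G : SimpleGraph V) [DecidableRel G.Adj] (γ : Sym2 V → ℕ) : Prop :=
  ∀ ⦃u v : V⦄, G.Adj u v → vSum G γ u ≠ vSum G γ v

/-- The number of edges of `G` coloured `i` by `γ`. -/
def edgeClassCard (G : SimpleGraph V) [DecidableRel G.Adj] (γ : Sym2 V → ℕ) (i : ℕ) : ℕ :=
  (G.edgeFinset.filter fun e => γ e = i).card

/-- `γ` is equitable as an edge `k`-colouring: any two colour classes among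
`{1, …, k}` have sizes differing by at most one. -/
def EquitableEdge (G : SimpleGraph V) [DecidableRel G.Adj] (k : ℕ) (γ : Sym2 V → ℕ) : Prop :=
  ∀ i ∈ Finset.Icc 1 k, ∀ j ∈ Finset.Icc 1 k,
    edgeClassCard G γ i ≤ edgeClassCard G γ j + 1

/-- `G` admits an equitable neighbour-sum-distinguishing edge `k`-colouring. -/
def HasEqNsdEdge (G : SimpleGraph V) [DecidableRel G.Adj] (k : ℕ) : Prop :=
  ∃ γ : Sym2 V → ℕ, IsEdgeKColoring G k γ ∧ NsdEdge G γ ∧ EquitableEdge G k γ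

instance {W X : Type*} : DecidableRel (completeBipartiteGraph W X).Adj := fun a b =>
  inferInstanceAs (Decidable ((a.isLeft ∧ b.isRight) ∨ (a.isRight ∧ b.isLeft)))

/-- Two triples of numbers in `{3, …, 6}` with the same total, 13 or 14, have a common entry. -/
theorem exists_common_sum (r c : Fin 3 → ℕ) (hr : ∀ i, 3 ≤ r i ∧ r i ≤ 6)
    (hc : ∀ j, 3 ≤ c j ∧ c j ≤ 6) (h : ∑ i, r i = ∑ j, c j)
    (ht : ∑ i, r i = 13 ∨ ∑ i, r i = 14) : ∃ i j, r i = c j := by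
  by_contra! hne
  simp only [Fin.forall_fin_succ, Fin.sum_univ_succ, Fin.isValue] at *
  simp at *
  omega

theorem K33_edgeFinset : (completeBipartiteGraph (Fin 3) (Fin 3)).edgeFinset =
    (univ : Finset (Fin 3 × Fin 3)).image fun p => s(Sum.inl p.1, Sum.inr p.2) := by
  decide

theorem K33_vSum_inl (γ : Sym2 (Fin 3 ⊕ Fin 3) → ℕ) (i : Fin 3) :
    vSum (completeBipartiteGraph (Fin 3) (Fin 3)) γ (Sum.inl i) =
      ∑ j, γ s(Sum.inl i, Sum.inr j) := by
  simp [vSum, SimpleGraph.neighborFinset_eq_filter, sum_filter]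

theorem K33_vSum_inr (γ : Sym2 (Fin 3 ⊕ Fin 3) → ℕ) (j : Fin 3) :
    vSum (completeBipartiteGraph (Fin 3) (Fin 3)) γ (Sum.inr j) =
      ∑ i, γ s(Sum.inl i, Sum.inr j) := by
  simp [vSum, SimpleGraph.neighborFinset_eq_filter, sum_filter, Sym2.eq_swap]

theorem K33_edgeClassCard (γ : Sym2 (Fin 3 ⊕ Fin 3) → ℕ) (c : ℕ) :
    edgeClassCard (completeBipartiteGraph (Fin 3) (Fin 3)) γ c =
      ∑ i : Fin 3, ∑ j : Fin 3, if γ s(Sum.inl i, Sum.inr j) = c then 1 else 0 := by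
  have hinj : Function.Injective
      fun p : Fin 3 × Fin 3 => (s(Sum.inl p.1, Sum.inr p.2) : Sym2 (Fin 3 ⊕ Fin 3)) := by
    rintro ⟨i, j⟩ ⟨i', j'⟩ h
    simpa using h
  rw [edgeClassCard, K33_edgeFinset, card_filter, sum_image hinj.injOn, Fintype.sum_prod_type]

theorem K33_not_two : ¬ HasEqNsdEdge (completeBipartiteGraph (Fin 3) (Fin 3)) 2 := by
  rintro ⟨γ, hcol, hnsd, heq⟩
  have h12 := heq 1 (by simp) 2 (by simp)
  have h21 := heq 2 (by simp) 1 (by simp)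
  rw [K33_edgeClassCard, K33_edgeClassCard] at h12 h21
  set a : Fin 3 → Fin 3 → ℕ := fun i j => γ s(Sum.inl i, Sum.inr j) with ha
  have hb : ∀ i j, 1 ≤ a i j ∧ a i j ≤ 2 := fun i j => hcol _ (by simp)
  -- The two colour classes partition the nine edges, and the total is 9 plus the size of class 2.
  have hn : (∑ i, ∑ j, if a i j = 1 then 1 else 0) +
      (∑ i, ∑ j, if a i j = 2 then 1 else 0) = 9 := by
    simp only [← sum_add_distrib]
    have h1 : ∀ i j, (if a i j = 1 then 1 else 0) + (if a i j = 2 then 1 else 0) = 1 := by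
      intro i j
      have := hb i j
      split_ifs <;> omega
    simp [h1]
  have ht : ∑ i, ∑ j, a i j = 9 + ∑ i, ∑ j, if a i j = 2 then 1 else 0 := by
    have h1 : ∀ i j, a i j = 1 + if a i j = 2 then 1 else 0 := by
      intro i j
      have := hb i j
      split_ifs <;> omega
    calc ∑ i, ∑ j, a i j = ∑ i, ∑ j, (1 + if a i j = 2 then 1 else 0) :=
          sum_congr rfl fun i _ => sum_congr rfl fun j _ => h1 i j
      _ = _ := by simp [sum_add_distrib]
  have hsum : ∀ f : Fin 3 → ℕ, (∀ i, 1 ≤ f i ∧ f i ≤ 2) → 3 ≤ ∑ i, f i ∧ ∑ i, f i ≤ 6 := by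
    intro f hf
    have h0 := hf 0
    have h1 := hf 1
    have h2 := hf 2
    rw [Fin.sum_univ_three]
    omega
  obtain ⟨i, j, hij⟩ := exists_common_sum (fun i => ∑ j, a i j) (fun j => ∑ i, a i j)
    (fun i => hsum _ (hb i)) (fun j => hsum _ fun i => hb i j) sum_comm
    (by simp only [ha] at *; omega)
  exact hnsd (u := Sum.inl i) (v := Sum.inr j) (by simp)
    (by rw [K33_vSum_inl, K33_vSum_inr]; exact hij)

/-- The complete bipartite graph `K_{3,3}` admits no equitable
neighbour-sum-distinguishing edge `2`-colouring; equivalently, its equitable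
nsd-index is at least `3`. -/
theorem K33_no_equitable_nsd_two :
    ¬ HasEqNsdEdge (completeBipartiteGraph (Fin 3) (Fin 3)) 2 ∧
    ∀ k : ℕ, HasEqNsdEdge (completeBipartiteGraph (Fin 3) (Fin 3)) k → 3 ≤ k := by
  refine ⟨K33_not_two, fun k hk => ?_⟩
  by_contra! hlt
  interval_cases k
  · obtain ⟨γ, hcol, -, -⟩ := hk
    have := hcol s(Sum.inl 0, Sum.inr 0) (by simp)
    omega
  · obtain ⟨γ, hcol, hnsd, -⟩ := hk
    have h1 : ∀ i j : Fin 3, γ s(Sum.inl i, Sum.inr j) = 1 := fun i j =>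
      have := hcol s(Sum.inl i, Sum.inr j) (by simp)
      by omega
    exact hnsd (u := Sum.inl 0) (v := Sum.inr 0) (by simp)
      (by simp [K33_vSum_inl, K33_vSum_inr, h1])
  · exact K33_not_two hk
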